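/- arXiv:1810.13057 — 2 statements merged into one kernel-verified Lean document; each statement's English description precedes it below -/
import Mathlib

section
/- Let u : ℝ³ → ℝ³ be twice continuously differentiable on a neighborhood of the half-space ℝ³₊ and vanish identically on the boundary plane {x ∈ ℝ³ : x₃ = 0}. Then for every boundary point x, ∂₃[(u·∇)u](x) = (∂₃u₃(x))·∂₃u(x) (as vectors in ℝ³). If in addition div u = 0 on ℝ³₊, then ∂₃[(u·∇)u](x) = 0 for every boundary point x. -/
/-- Partial derivative in the `j`-th coordinate direction of a function on `ℝ³`. -/
noncomputable def pd3 {F : Type*} [NormedAddCommGroup F] [NormedSpace ℝ F]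
    (j : Fin 3) (g : (Fin 3 → ℝ) → F) (x : Fin 3 → ℝ) : F :=
  fderiv ℝ g x (Pi.single j 1)

/-- The convective term `(u·∇)u`, defined componentwise by `((u·∇)u)ᵢ = Σⱼ uⱼ ∂ⱼuᵢ`. -/
noncomputable def convTerm (u : (Fin 3 → ℝ) → (Fin 3 → ℝ)) (x : Fin 3 → ℝ) : Fin 3 → ℝ :=
  fun i => ∑ j : Fin 3, u x j * pd3 j u x i

theorem fderiv_expand (L : (Fin 3 → ℝ) →L[ℝ] (Fin 3 → ℝ)) (v : Fin 3 → ℝ) :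
    L v = ∑ j : Fin 3, v j • L (Pi.single j 1) := by
  conv_lhs => rw [pi_eq_sum_univ' v]
  rw [map_sum]
  simp only [map_smul]

theorem convTerm_eq (u : (Fin 3 → ℝ) → (Fin 3 → ℝ)) :
    convTerm u = fun y => fderiv ℝ u y (u y) := by
  funext y i
  rw [fderiv_expand]
  simp [convTerm, pd3]

/-- If `u : ℝ³ → ℝ³` is `C²` on a neighborhood of the half-space
`ℝ³₊ = {x : x₃ ≥ 0}` and vanishes on the boundary plane `{x₃ = 0}`, then at every
boundary point `x`, `∂₃[(u·∇)u](x) = (∂₃u₃(x)) • ∂₃u(x)`.  If in addition `div u = 0`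
on `ℝ³₊`, then `∂₃[(u·∇)u](x) = 0` at every boundary point. -/
theorem stmt1 (u : (Fin 3 → ℝ) → (Fin 3 → ℝ))
    (s : Set (Fin 3 → ℝ)) (hs_open : IsOpen s)
    (hs_half : {x : Fin 3 → ℝ | 0 ≤ x 2} ⊆ s)
    (hu : ContDiffOn ℝ 2 u s)
    (hbd : ∀ x : Fin 3 → ℝ, x 2 = 0 → u x = 0) :
    (∀ x : Fin 3 → ℝ, x 2 = 0 →
      pd3 2 (convTerm u) x = (pd3 2 u x 2) • (pd3 2 u x)) ∧
    ((∀ x : Fin 3 → ℝ, 0 ≤ x 2 → ∑ i : Fin 3, pd3 i u x i = 0) →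
      ∀ x : Fin 3 → ℝ, x 2 = 0 → pd3 2 (convTerm u) x = 0) := by
  have key : ∀ x : Fin 3 → ℝ, x 2 = 0 → DifferentiableAt ℝ u x ∧
      pd3 2 (convTerm u) x = fderiv ℝ u x (pd3 2 u x) := by
    intro x hx
    have hxs : x ∈ s := hs_half (by simp [hx])
    have hc : ContDiffAt ℝ 2 u x := hu.contDiffAt (hs_open.mem_nhds hxs)
    have hd : DifferentiableAt ℝ u x := hc.differentiableAt (by norm_num)
    have hd2 : DifferentiableAt ℝ (fderiv ℝ u) x :=
      (hc.fderiv_right (m := 1) (by norm_num)).differentiableAt (by norm_num)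
    refine ⟨hd, ?_⟩
    rw [convTerm_eq]
    unfold pd3
    rw [(hd2.hasFDerivAt.clm_apply hd.hasFDerivAt).fderiv]
    simp [hbd x hx]
  have tang : ∀ x : Fin 3 → ℝ, x 2 = 0 → ∀ j : Fin 3, j ≠ 2 → pd3 j u x = 0 := by
    intro x hx j hj
    have hd := (key x hx).1
    have h1 := hd.hasFDerivAt.hasLineDerivAt (Pi.single j 1)
    have h2 : (fun t : ℝ => u (x + t • Pi.single j 1)) = fun _ => 0 := by
      funext t
      apply hbd
      simp [hx, hj.symm]
    unfold HasLineDerivAt at h1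
    rw [h2] at h1
    exact h1.unique (hasDerivAt_const _ _)
  have first : ∀ x : Fin 3 → ℝ, x 2 = 0 →
      pd3 2 (convTerm u) x = (pd3 2 u x 2) • (pd3 2 u x) := by
    intro x hx
    rw [(key x hx).2, fderiv_expand]
    have h0 := tang x hx 0 (by decide)
    have h1 := tang x hx 1 (by decide)
    change ∑ j : Fin 3, pd3 2 u x j • pd3 j u x = _
    rw [Fin.sum_univ_three, h0, h1]
    simp
  refine ⟨first, fun hdiv x hx => ?_⟩
  have h := hdiv x hx.ge
  rw [Fin.sum_univ_three, tang x hx 0 (by decide), tang x hx 1 (by decide)] at h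
  rw [first x hx]
  have h' : pd3 2 u x 2 = 0 := by simpa using h
  rw [h', zero_smul]
end

section
/- Let T > 0, M > 0, N > 0. Let α, F : [0,T] → ℝ with α differentiable and F continuous, and let κ : [0,T] → ℝ be continuous with κ(t)² ≥ M² for all t ∈ [0,T]. Suppose α'(t) = κ(t)²·α(t) + F(t) for all t ∈ [0,T], and |α(0)| > T·N. Then at least one of the following holds: sup_{t∈[0,T]} |F(t)| > N, or sup_{t∈[0,T]} |α(t)| ≥ e^{M²T}·(|α(0)| − T·N). -/
theorem aux13 (T M N N' : ℝ) (hT : 0 < T) (hNN : N < N') (hN : 0 < N)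
    (α F κ : ℝ → ℝ)
    (hα : ∀ t ∈ Set.Icc 0 T,
      HasDerivWithinAt α (κ t ^ 2 * α t + F t) (Set.Icc 0 T) t)
    (hF : ∀ t ∈ Set.Icc 0 T, -N ≤ F t)
    (hκM : ∀ t ∈ Set.Icc 0 T, M ^ 2 ≤ κ t ^ 2)
    (h0 : T * N' < α 0) :
    Real.exp (M ^ 2 * T) * (α 0 - T * N') ≤ α T := by
  have hg : ∀ t : ℝ, HasDerivAt (fun t => Real.exp (M ^ 2 * t) * (α 0 - t * N'))
      (Real.exp (M ^ 2 * t) * (M ^ 2 * 1) * (α 0 - t * N')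
        + Real.exp (M ^ 2 * t) * (-(1 * N'))) t := by
    intro t
    exact (((hasDerivAt_id t).const_mul (M ^ 2)).exp).mul
      (((hasDerivAt_id t).mul_const N').const_sub (α 0))
  refine image_le_of_deriv_right_lt_deriv_boundary' (a := 0) (b := T)
    (f := fun t => Real.exp (M ^ 2 * t) * (α 0 - t * N')) (B := α)
    (fun t _ => (hg t).continuousAt.continuousWithinAt)
    (fun t _ => (hg t).hasDerivWithinAt) (by simp)
    (fun t ht => (hα t ht).continuousWithinAt)
    (B' := fun t => κ t ^ 2 * α t + F t) ?_ ?_ ⟨hT.le, le_rfl⟩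
  · intro t ht
    have h1 := hα t ⟨ht.1, ht.2.le⟩
    exact h1.mono_of_mem_nhdsWithin (mem_nhdsGE_iff_exists_Icc_subset.2
      ⟨T, ht.2, Set.Icc_subset_Icc_left ht.1⟩)
  · intro t ht heq
    have ht' : t ∈ Set.Icc 0 T := ⟨ht.1, ht.2.le⟩
    have h1 := hF t ht'
    have h2 := hκM t ht'
    have hE : 1 ≤ Real.exp (M ^ 2 * t) :=
      Real.one_le_exp (mul_nonneg (sq_nonneg M) ht.1)
    have h3 : 0 ≤ α 0 - t * N' := by nlinarith [ht.2]
    have h4 : 0 ≤ α t := by rw [← heq]; positivity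
    have h5 := mul_le_mul_of_nonneg_right h2 h4
    have h6 : Real.exp (M ^ 2 * t) * (M ^ 2 * 1) * (α 0 - t * N') = M ^ 2 * α t := by
      rw [← heq]; ring
    rw [h6]
    nlinarith

/-- (ODE form of the main theorem.)  Let `T, M, N > 0`, let
`α : [0,T] → ℝ` be differentiable, `F` continuous, and `κ` continuous with
`κ(t)² ≥ M²`, with `α' = κ²·α + F` on `[0,T]` and `|α(0)| > T·N`.  Then either
`sup_{[0,T]} |F| > N`, or `sup_{[0,T]} |α| ≥ e^{M²T}·(|α(0)| − T·N)`. -/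
theorem stmt13 (T M N : ℝ) (hT : 0 < T) (hM : 0 < M) (hN : 0 < N)
    (α F κ : ℝ → ℝ)
    (hα : ∀ t ∈ Set.Icc 0 T,
      HasDerivWithinAt α (κ t ^ 2 * α t + F t) (Set.Icc 0 T) t)
    (hF : ContinuousOn F (Set.Icc 0 T))
    (hκ : ContinuousOn κ (Set.Icc 0 T))
    (hκM : ∀ t ∈ Set.Icc 0 T, M ^ 2 ≤ κ t ^ 2)
    (h0 : |α 0| > T * N) :
    N < sSup ((fun t => |F t|) '' Set.Icc 0 T) ∨
    Real.exp (M ^ 2 * T) * (|α 0| - T * N) ≤ sSup ((fun t => |α t|) '' Set.Icc 0 T) := by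
  by_cases hS : N < sSup ((fun t => |F t|) '' Set.Icc 0 T)
  · exact Or.inl hS
  right
  have hFb : ∀ t ∈ Set.Icc 0 T, |F t| ≤ N := fun t ht =>
    (le_csSup (isCompact_Icc.image_of_continuousOn hF.abs).bddAbove
      (Set.mem_image_of_mem (fun t => |F t|) ht)).trans (not_lt.1 hS)
  have hαc : ContinuousOn α (Set.Icc 0 T) := fun t ht => (hα t ht).continuousWithinAt
  have hb : ∀ t ∈ Set.Icc 0 T, |α t| ≤ sSup ((fun t => |α t|) '' Set.Icc 0 T) := fun t ht =>
    le_csSup (isCompact_Icc.image_of_continuousOn hαc.abs).bddAbove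
      (Set.mem_image_of_mem (fun t => |α t|) ht)
  have hb0 := hb 0 ⟨le_rfl, hT.le⟩
  have hbT := hb T ⟨hT.le, le_rfl⟩
  generalize sSup ((fun t => |α t|) '' Set.Icc 0 T) = S at hb0 hbT
  have key : ∀ N', N < N' → T * N' < |α 0| →
      Real.exp (M ^ 2 * T) * (|α 0| - T * N') ≤ |α T| := by
    intro N' h1 h2
    rcases le_total 0 (α 0) with h | h
    · rw [abs_of_nonneg h] at h2 ⊢
      exact (aux13 T M N N' hT h1 hN α F κ hα
        (fun t ht => (abs_le.1 (hFb t ht)).1) hκM h2).trans (le_abs_self _)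
    · rw [abs_of_nonpos h] at h2 ⊢
      refine (aux13 T M N N' hT h1 hN (fun t => -α t) (fun t => -F t) κ ?_
        (fun t ht => neg_le_neg (abs_le.1 (hFb t ht)).2) hκM h2).trans (neg_le_abs _)
      intro t ht
      exact (hα t ht).neg.congr_deriv (by ring)
  by_contra! hlt
  have hE := Real.exp_pos (M ^ 2 * T)
  generalize Real.exp (M ^ 2 * T) = E at *
  have hTN : 0 < T * N := mul_pos hT hN
  have e1 : E * (|α 0| - T * (N + (E * (|α 0| - T * N) - S) / (2 * E * T)))
      = (E * (|α 0| - T * N) + S) / 2 := by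
    field_simp
    ring
  have hpos : 0 < (E * (|α 0| - T * N) + S) / 2 := by linarith
  have := key (N + (E * (|α 0| - T * N) - S) / (2 * E * T))
    (lt_add_of_pos_right _ (div_pos (by linarith) (by positivity)))
    (by rw [← e1] at hpos; linarith [pos_of_mul_pos_right hpos hE.le])
  rw [e1] at this
  linarith
end
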